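/- Let a ≤ b be real numbers and let α ∈ (0,1]. For a Borel probability measure μ supported on [a,b], define CVaR_α(μ) = sup_{ν ∈ ℝ} ( ν − (1/α) ∫_{[a,b]} max(ν − x, 0) dμ(x) ). Then for all Borel probability measures μ, ν supported on [a,b] with CDFs F_μ, F_ν: |CVaR_α(μ) − CVaR_α(ν)| ≤ ((b − a)/α) · sup_{t∈ℝ} |F_μ(t) − F_ν(t)|. -/

import Mathlib

open MeasureTheory

/-- The conditional value at risk at level `α` of a Borel probability measure `μ`
supported on `[a, b]`:
`CVaR_α(μ) = sup_{ν ∈ ℝ} (ν - (1/α) ∫_{[a,b]} max (ν - x) 0 dμ(x))`. -/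
noncomputable def CVaR (α a b : ℝ) (μ : Measure ℝ) : ℝ :=
  ⨆ v : ℝ, (v - (1 / α) * ∫ x in Set.Icc a b, max (v - x) 0 ∂μ)

lemma cvar_aux_ae (a b : ℝ) (μ : Measure ℝ) [IsProbabilityMeasure μ]
    (hμ : μ (Set.Icc a b) = 1) : ∀ᵐ x ∂μ, x ∈ Set.Icc a b := by
  rw [← prob_compl_eq_zero_iff measurableSet_Icc] at hμ
  exact hμ

lemma cvar_aux_restrict (a b : ℝ) (μ : Measure ℝ) [IsProbabilityMeasure μ]
    (hμ : μ (Set.Icc a b) = 1) : μ.restrict (Set.Icc a b) = μ :=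
  Measure.restrict_eq_self_of_ae_mem (cvar_aux_ae a b μ hμ)

lemma cvar_aux_int (a b v : ℝ) (μ : Measure ℝ) [IsProbabilityMeasure μ]
    (hμ : μ (Set.Icc a b) = 1) : Integrable (fun x => max (v - x) 0) μ := by
  refine Integrable.of_bound (C := |v| + |a| + |b|) (by fun_prop) ?_
  filter_upwards [cvar_aux_ae a b μ hμ] with x hx
  rw [Real.norm_eq_abs, abs_of_nonneg (le_max_right _ _)]
  have := le_abs_self v
  have := neg_abs_le a
  have := abs_nonneg v
  have := abs_nonneg a
  have := abs_nonneg b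
  have := hx.1
  apply max_le <;> linarith

lemma cvar_aux_layer (a b v : ℝ) (hv : v ≤ b) (μ : Measure ℝ) [IsProbabilityMeasure μ]
    (hμ : μ (Set.Icc a b) = 1) (hab : a ≤ b) :
    ∫ x, max (v - x) 0 ∂μ = ∫ t in Set.Ioc 0 (b - a), μ.real (Set.Iic (v - t)) := by
  rw [Integrable.integral_eq_integral_Ioc_meas_le (M := b - a) (cvar_aux_int a b v μ hμ)]
  · apply setIntegral_congr_fun measurableSet_Ioc
    intro t ht
    have : {x : ℝ | t ≤ max (v - x) 0} = Set.Iic (v - t) := by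
      ext x
      simp only [Set.mem_ofPred_eq, Set.mem_Iic, le_max_iff]
      constructor
      · rintro (h | h)
        · linarith
        · linarith [ht.1]
      · intro h
        left; linarith
    simp only [this]
  · exact Filter.Eventually.of_forall fun x => le_max_right _ _
  · filter_upwards [cvar_aux_ae a b μ hμ] with x hx
    have := hx.1
    apply max_le <;> linarith

lemma cvar_aux_bdd (μ ν : Measure ℝ) [IsProbabilityMeasure μ] [IsProbabilityMeasure ν] :
    BddAbove (Set.range fun t : ℝ => |(μ (Set.Iic t)).toReal - (ν (Set.Iic t)).toReal|) := by
  refine ⟨1, ?_⟩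
  rintro _ ⟨t, rfl⟩
  have h1 : μ.real (Set.Iic t) ≤ 1 := measureReal_le_one
  have h2 : ν.real (Set.Iic t) ≤ 1 := measureReal_le_one
  have h3 : 0 ≤ μ.real (Set.Iic t) := measureReal_nonneg
  have h4 : 0 ≤ ν.real (Set.Iic t) := measureReal_nonneg
  simp only [Measure.real] at h1 h2 h3 h4
  rw [abs_le]; constructor <;> linarith

lemma cvar_aux_intervalInt (v c : ℝ) (μ : Measure ℝ) [IsProbabilityMeasure μ] :
    IntegrableOn (fun t => μ.real (Set.Iic (v - t))) (Set.Ioc 0 c) := by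
  have hanti : Antitone (fun t => μ.real (Set.Iic (v - t))) := by
    intro s t hst
    exact measureReal_mono (Set.Iic_subset_Iic.2 (by linarith))
  refine Integrable.of_bound (C := 1) hanti.measurable.aestronglyMeasurable ?_
  refine Filter.Eventually.of_forall fun t => ?_
  rw [Real.norm_eq_abs, abs_of_nonneg measureReal_nonneg]
  exact measureReal_le_one

lemma cvar_aux_diff_le (a b v : ℝ) (hv : v ≤ b) (hab : a ≤ b) (μ ν : Measure ℝ)
    [IsProbabilityMeasure μ] [IsProbabilityMeasure ν]
    (hμ : μ (Set.Icc a b) = 1) (hν : ν (Set.Icc a b) = 1) :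
    |∫ x, max (v - x) 0 ∂μ - ∫ x, max (v - x) 0 ∂ν| ≤
      (b - a) * ⨆ t : ℝ, |(μ (Set.Iic t)).toReal - (ν (Set.Iic t)).toReal| := by
  rw [cvar_aux_layer a b v hv μ hμ hab, cvar_aux_layer a b v hv ν hν hab,
    ← integral_sub (cvar_aux_intervalInt v _ μ) (cvar_aux_intervalInt v _ ν), ← Real.norm_eq_abs]
  have := norm_setIntegral_le_of_norm_le_const (μ := volume) (s := Set.Ioc 0 (b - a))
    (f := fun t => μ.real (Set.Iic (v - t)) - ν.real (Set.Iic (v - t)))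
    (C := ⨆ t : ℝ, |(μ (Set.Iic t)).toReal - (ν (Set.Iic t)).toReal|)
    (by simp) (fun t _ => le_ciSup (cvar_aux_bdd μ ν) (v - t))
  rw [Real.volume_real_Ioc_of_le (by linarith)] at this
  linarith

lemma cvar_aux_big (a b v : ℝ) (hv : b ≤ v) (μ : Measure ℝ) [IsProbabilityMeasure μ]
    (hμ : μ (Set.Icc a b) = 1) :
    ∫ x, max (v - x) 0 ∂μ = (v - b) + ∫ x, max (b - x) 0 ∂μ := by
  have : ∫ x, max (v - x) 0 ∂μ = ∫ x, ((v - b) + max (b - x) 0) ∂μ := by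
    apply integral_congr_ae
    filter_upwards [cvar_aux_ae a b μ hμ] with x hx
    have := hx.2
    rw [max_eq_left (by linarith), max_eq_left (by linarith)]; ring
  rw [this, integral_add (integrable_const _) (cvar_aux_int a b b μ hμ)]
  simp

lemma cvar_aux_diff (a b v : ℝ) (hab : a ≤ b) (μ ν : Measure ℝ)
    [IsProbabilityMeasure μ] [IsProbabilityMeasure ν]
    (hμ : μ (Set.Icc a b) = 1) (hν : ν (Set.Icc a b) = 1) :
    |∫ x, max (v - x) 0 ∂μ - ∫ x, max (v - x) 0 ∂ν| ≤
      (b - a) * ⨆ t : ℝ, |(μ (Set.Iic t)).toReal - (ν (Set.Iic t)).toReal| := by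
  rcases le_total v b with hv | hv
  · exact cvar_aux_diff_le a b v hv hab μ ν hμ hν
  · rw [cvar_aux_big a b v hv μ hμ, cvar_aux_big a b v hv ν hν, add_sub_add_left_eq_sub]
    exact cvar_aux_diff_le a b b le_rfl hab μ ν hμ hν

lemma cvar_aux_bddg (a b α : ℝ) (hα : α ∈ Set.Ioc (0 : ℝ) 1)
    (μ : Measure ℝ) [IsProbabilityMeasure μ] (hμ : μ (Set.Icc a b) = 1) :
    BddAbove (Set.range fun v : ℝ => v - (1 / α) * ∫ x, max (v - x) 0 ∂μ) := by
  refine ⟨b, ?_⟩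
  rintro _ ⟨v, rfl⟩
  have h0 : 0 ≤ ∫ x, max (v - x) 0 ∂μ := integral_nonneg fun x => le_max_right _ _
  have h1 : (1 : ℝ) ≤ 1 / α := by rw [le_div_iff₀ hα.1]; linarith [hα.2]
  have h2 : v - b ≤ ∫ x, max (v - x) 0 ∂μ := by
    have : ∫ _x, (v - b) ∂μ ≤ ∫ x, max (v - x) 0 ∂μ := by
      apply integral_mono_ae (integrable_const _) (cvar_aux_int a b v μ hμ)
      filter_upwards [cvar_aux_ae a b μ hμ] with x hx
      exact le_max_of_le_left (by linarith [hx.2])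
    simpa using this
  have := mul_le_mul_of_nonneg_right h1 h0
  simp only
  linarith

lemma cvar_aux_one (a b : ℝ) (hab : a ≤ b) (α : ℝ) (hα : α ∈ Set.Ioc (0 : ℝ) 1)
    (μ ν : Measure ℝ) [IsProbabilityMeasure μ] [IsProbabilityMeasure ν]
    (hμ : μ (Set.Icc a b) = 1) (hν : ν (Set.Icc a b) = 1) :
    CVaR α a b μ ≤ CVaR α a b ν +
      ((b - a) / α) * ⨆ t : ℝ, |(μ (Set.Iic t)).toReal - (ν (Set.Iic t)).toReal| := by
  unfold CVaR
  rw [cvar_aux_restrict a b μ hμ, cvar_aux_restrict a b ν hν]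
  apply ciSup_le
  intro v
  have h1 := le_ciSup (cvar_aux_bddg a b α hα ν hν) v
  have h2 := (abs_le.1 (cvar_aux_diff a b v hab μ ν hμ hν)).1
  have h3 := mul_le_mul_of_nonneg_left h2 (one_div_pos.2 hα.1).le
  rw [div_eq_mul_one_div (b - a) α]
  linarith

/-- Lipschitz continuity of CVaR at level `α ∈ (0, 1]` with respect to the supremum
distance of CDFs, with Lipschitz constant `(b - a) / α`. -/
theorem cvar_lipschitz_sup
    (a b : ℝ) (hab : a ≤ b) (α : ℝ) (hα : α ∈ Set.Ioc (0 : ℝ) 1)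
    (μ ν : Measure ℝ) [IsProbabilityMeasure μ] [IsProbabilityMeasure ν]
    (hμ : μ (Set.Icc a b) = 1) (hν : ν (Set.Icc a b) = 1) :
    |CVaR α a b μ - CVaR α a b ν| ≤
      ((b - a) / α) * ⨆ t : ℝ, |(μ (Set.Iic t)).toReal - (ν (Set.Iic t)).toReal| := by
  have h1 := cvar_aux_one a b hab α hα μ ν hμ hν
  have h2 := cvar_aux_one a b hab α hα ν μ hν hμ
  simp only [abs_sub_comm (ν _).toReal] at h2
  rw [abs_le]
  constructor <;> linarith
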